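/- For all integers k >= 0, j >= 0, m >= 1, setting n = 2m + kj, and for all rationals t_1, ..., t_m: \sum_{Q \in Q_{n,k}^{m,j}} \prod_{i=1}^{m} t_i^{\alpha_i(Q)} = (m/((m+j+1)(m+j))) * C(m+j, j) * \sum_{r=0}^{m} C(m+j+1, r) * (r!/m!) * B_{m,r}(1!t_1, 2!t_2, ...). -/

import Mathlib

open Finset

inductive Step : Type
  | u | d | h
deriving DecidableEq

/-- Lengths of maximal blocks of letters with `wt s ≠ none`, weighted by `wt`. -/
def runs (wt : Step → Option ℕ) : List Step → List ℕ
  | [] => []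
  | s :: l =>
    match wt s, runs wt l with
    | none, r => r
    | some n, r =>
      match l with
      | [] => [n]
      | s' :: _ =>
        match wt s' with
        | none => n :: r
        | some _ =>
          match r with
          | a :: rest => (n + a) :: rest
          | [] => [n]

def uRuns : List Step → List ℕ :=
  runs (fun s => match s with | Step.u => some 1 | _ => none)

def uhRuns (k : ℕ) : List Step → List ℕ :=
  runs (fun s => match s with | Step.u => some 1 | Step.h => some k | Step.d => none)

def alpha (i : ℕ) (w : List Step) : ℕ := (uRuns w).count i

def beta (i : ℕ) (w : List Step) : ℕ := (uRuns w).tail.count i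

def IsNonneg (w : List Step) : Prop :=
  ∀ i : ℕ, (w.take i).count Step.d ≤ (w.take i).count Step.u

def pathSet (m j : ℕ) : Set (List Step) :=
  {w | w.count Step.u = m ∧ w.count Step.d = m ∧ w.count Step.h = j ∧ IsNonneg w}

/-- no horizontal step lies on the x-axis -/
def NoLowH (w : List Step) : Prop :=
  ∀ (i : ℕ) (hi : i < w.length), w[i]'hi = Step.h →
    (w.take i).count Step.u ≠ (w.take i).count Step.d

def qSet (m j : ℕ) : Set (List Step) :=
  {w | w ∈ pathSet m j ∧ NoLowH w}

/-- normalized partial Bell polynomial (r!/m!) B_{m,r}(1!t₁,2!t₂,…) -/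
def bellNorm (m r : ℕ) (t : ℕ → ℚ) : ℚ :=
  ∑ f : Fin m → Fin (m + 1),
    if (∑ i : Fin m, (f i : ℕ)) = r ∧ (∑ i : Fin m, ((i : ℕ) + 1) * (f i : ℕ)) = m then
      (r.factorial : ℚ) / (∏ i : Fin m, ((f i : ℕ).factorial : ℚ)) * ∏ i : Fin m, t ((i : ℕ) + 1) ^ (f i : ℕ)
    else 0

/-- normalized potential polynomial  P_p^{(lam)}(1!t₁,2!t₂,…)/p! -/
def potential (lam p : ℕ) (t : ℕ → ℚ) : ℚ :=
  ∑ r ∈ Finset.range (p + 1), (Nat.choose lam r : ℚ) * bellNorm p r t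



namespace QP

/-- weight of a word, given the length `c` of the currently open `u`-run -/
def wt (T : ℕ → ℚ) : ℕ → List Step → ℚ
  | c, [] => T c
  | c, Step.u :: w => wt T (c + 1) w
  | c, Step.d :: w => T c * wt T 0 w
  | c, Step.h :: w => T c * wt T 0 w

def good : ℕ → List Step → Prop
  | _, [] => True
  | p, Step.u :: w => good (p + 1) w
  | p, Step.d :: w => 1 ≤ p ∧ good (p - 1) w
  | p, Step.h :: w => 1 ≤ p ∧ good p w

def consE (s : Step) : List Step ↪ List Step := ⟨fun w => s :: w, fun a b h => by simpa using h⟩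

lemma consE_apply (s : Step) (w : List Step) : consE s w = s :: w := rfl

def W : ℕ → ℕ → ℕ → ℕ → Finset (List Step)
  | 0, x, p, j => if x = 0 ∧ p = 0 ∧ j = 0 then {[]} else ∅
  | L + 1, x, p, j =>
    (if 1 ≤ x then (W L (x - 1) (p + 1) j).map (consE Step.u) else ∅) ∪
    ((if 1 ≤ p then (W L x (p - 1) j).map (consE Step.d) else ∅) ∪
     (if 1 ≤ p ∧ 1 ≤ j then (W L x p (j - 1)).map (consE Step.h) else ∅))

lemma mem_W (L x p j : ℕ) (w : List Step) :
    w ∈ W L x p j ↔ w.length = L ∧ w.count Step.u = x ∧ w.count Step.d = x + p ∧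
      w.count Step.h = j ∧ good p w := by
  induction L generalizing x p j w with
  | zero =>
    rw [W]
    constructor
    · intro h
      split_ifs at h with h0
      · obtain ⟨rfl, rfl, rfl⟩ := h0
        simp at h; subst h; simp [good]
      · simp at h
    · rintro ⟨h1, h2, h3, h4, h5⟩
      have : w = [] := by simpa using h1
      subst this
      simp at h2 h3 h4
      subst h2 h4
      simp at h3
      simp [← h3]
  | succ L ih =>
    rw [W]
    have key : ∀ (c : Prop) [Decidable c] (s : Step) (F : Finset (List Step)),
        (w ∈ (if c then F.map (consE s) else ∅)) ↔ c ∧ ∃ v ∈ F, s :: v = w := by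
      intro c _ s F
      split_ifs with hc <;> simp [hc, consE_apply]
    rw [Finset.mem_union, Finset.mem_union, key, key, key]
    cases w with
    | nil => simp
    | cons s w =>
      cases s <;> simp [ih, good, List.count_cons] <;> constructor <;> intro h <;>
        (try have := h.1) <;> refine ⟨?_, ?_⟩ <;> grind

lemma sum_W (T : ℕ → ℚ) (L c x p j : ℕ) :
    ∑ w ∈ W (L + 1) x p j, wt T c w =
      (if 1 ≤ x then ∑ w ∈ W L (x - 1) (p + 1) j, wt T (c + 1) w else 0) +
      T c * (if 1 ≤ p then ∑ w ∈ W L x (p - 1) j, wt T 0 w +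
        (if 1 ≤ j then ∑ w ∈ W L x p (j - 1), wt T 0 w else 0) else 0) := by
  have hd : ∀ (c c' : Prop) [Decidable c] [Decidable c'] (s s' : Step) (F F' : Finset (List Step)),
      s ≠ s' → Disjoint (if c then F.map (consE s) else ∅) (if c' then F'.map (consE s') else ∅) := by
    intro c c' _ _ s s' F F' hs
    split_ifs <;> try simp only [Finset.disjoint_empty_left, Finset.disjoint_empty_right]
    rw [Finset.disjoint_left]
    intro a ha hb
    simp [consE_apply] at ha hb
    obtain ⟨v, _, rfl⟩ := ha
    obtain ⟨v', _, h⟩ := hb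
    simp at h
    exact hs h.1.symm
  rw [W, Finset.sum_union, Finset.sum_union]
  · by_cases h1 : 1 ≤ x <;> by_cases h2 : 1 ≤ p <;> by_cases h3 : 1 ≤ j <;>
      simp [h1, h2, h3, consE_apply, wt, Finset.mul_sum, mul_add]
  · exact hd _ _ _ _ _ _ (by decide)
  · rw [Finset.disjoint_union_right]
    exact ⟨hd _ _ _ _ _ _ (by decide), hd _ _ _ _ _ _ (by decide)⟩

/-- coefficients of powers -/
noncomputable def cf (T : ℕ → ℚ) (n k : ℕ) : ℚ := PowerSeries.coeff k ((PowerSeries.mk T) ^ n)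

lemma cf_zero (T : ℕ → ℚ) (h0 : T 0 = 1) (n : ℕ) : cf T n 0 = 1 := by
  rw [cf, PowerSeries.coeff_zero_eq_constantCoeff_apply, map_pow,
    ← PowerSeries.coeff_zero_eq_constantCoeff_apply, PowerSeries.coeff_mk, h0, one_pow]

lemma cf_succ (T : ℕ → ℚ) (n x : ℕ) :
    ∑ a ∈ Finset.HasAntidiagonal.antidiagonal x, T a.1 * cf T n a.2 = cf T (n + 1) x := by
  rw [cf, pow_succ', PowerSeries.coeff_mul]
  simp [cf]

lemma cf_deriv (T : ℕ → ℚ) (n x : ℕ) :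
    (n + 1) * ∑ a ∈ Finset.HasAntidiagonal.antidiagonal x, a.1 * T a.1 * cf T n a.2 = x * cf T (n + 1) x := by
  cases x with
  | zero => simp
  | succ x =>
    have h := congrArg (PowerSeries.coeff x)
      (PowerSeries.derivative_pow (PowerSeries.mk T : PowerSeries ℚ) (n + 1))
    rw [PowerSeries.coeff_derivative, mul_assoc, mul_comm (_ ^ _),
      ← map_natCast (PowerSeries.C (R := ℚ)), PowerSeries.coeff_C_mul, PowerSeries.coeff_mul] at h
    rw [Finset.Nat.sum_antidiagonal_succ]
    simp only [PowerSeries.coeff_derivative, PowerSeries.coeff_mk, Nat.add_sub_cancel] at h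
    simp only [cf]
    push_cast at h ⊢
    rw [mul_comm ((x : ℚ) + 1), h]
    simp [mul_comm (T _)]

noncomputable def K (T : ℕ → ℚ) (x p j : ℕ) : ℚ :=
  p / ((x + p + j : ℕ) : ℚ) * (x + p + j).choose j * cf T (x + p + j) x

lemma sum_K (T : ℕ → ℚ) (x p j : ℕ) :
    ∑ a ∈ Finset.HasAntidiagonal.antidiagonal x, T a.1 * K T a.2 (p + a.1) j =
      ((x + p + j).choose j : ℚ) / ((x + p + j : ℕ) : ℚ) *
        (p + x / ((x + p + j : ℕ) + 1)) * cf T (x + p + j + 1) x := by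
  have h1 := cf_succ T (x + p + j) x
  have h2 := cf_deriv T (x + p + j) x
  have : ∀ a ∈ Finset.HasAntidiagonal.antidiagonal x, T a.1 * K T a.2 (p + a.1) j =
      ((x + p + j).choose j : ℚ) / ((x + p + j : ℕ) : ℚ) *
       (p * (T a.1 * cf T (x + p + j) a.2) + a.1 * T a.1 * cf T (x + p + j) a.2) := by
    intro a ha
    rw [Finset.HasAntidiagonal.mem_antidiagonal] at ha
    have e : a.2 + (p + a.1) + j = x + p + j := by omega
    rw [K, e]
    push_cast
    ring
  rw [Finset.sum_congr rfl this, ← Finset.mul_sum, Finset.sum_add_distrib, ← Finset.mul_sum, h1]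
  have h3 : ((x + p + j : ℕ) : ℚ) + 1 ≠ 0 := by positivity
  have h4 : ∑ a ∈ Finset.HasAntidiagonal.antidiagonal x, a.1 * T a.1 * cf T (x + p + j) a.2
     = x * cf T (x + p + j + 1) x / (((x + p + j : ℕ) : ℚ) + 1) := by
    rw [← h2]; field_simp
  rw [h4]
  ring

lemma K_rec (T : ℕ → ℚ) (x p j : ℕ) (hn : 1 ≤ x + p + j) :
    K T x (p + 1) j =
      (∑ a ∈ Finset.HasAntidiagonal.antidiagonal x, T a.1 * K T a.2 (p + a.1) j) +
      (if 1 ≤ j then ∑ a ∈ Finset.HasAntidiagonal.antidiagonal x, T a.1 * K T a.2 (p + 1 + a.1) (j - 1) else 0) := by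
  rw [sum_K, sum_K, K]
  cases j with
  | zero =>
    have : ((x + p : ℕ) : ℚ) ≠ 0 := by
      have : x + p ≠ 0 := by omega
      exact_mod_cast this
    simp [← add_assoc]
    left
    push_cast at this
    have : (x : ℚ) + p + 1 ≠ 0 := by positivity
    field_simp
    ring
  | succ j =>
    simp only [show 1 ≤ j + 1 by omega, if_true, Nat.add_sub_cancel]
    rw [show x + (p + 1) + (j + 1) = x + p + j + 1 + 1 by ring,
      show x + p + (j + 1) = x + p + j + 1 by ring, show x + (p + 1) + j = x + p + j + 1 by ring]
    rw [Nat.choose_succ_succ (x + p + j + 1) j]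
    have h := Nat.choose_succ_right_eq (x + p + j + 1) j
    rw [show x + p + j + 1 - j = x + p + 1 by omega] at h
    have h' : ((x + p + j + 1).choose (j + 1) : ℚ) * (j + 1) =
      ((x + p + j + 1).choose j : ℚ) * (x + p + 1) := by exact_mod_cast h
    have h'' : ((x + p + j + 1).choose (j + 1) : ℚ) =
      ((x + p + j + 1).choose j : ℚ) * (x + p + 1) / (j + 1) := by
      rw [← h']; field_simp
    push_cast
    rw [h'']
    have : (x : ℚ) + p + j + 1 + 1 ≠ 0 := by positivity
    have : (x : ℚ) + p + j + 1 ≠ 0 := by positivity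
    have : (j : ℚ) + 1 ≠ 0 := by positivity
    field_simp
    ring

lemma sum_main (T : ℕ → ℚ) (h0 : T 0 = 1) (L : ℕ) : ∀ c x p j : ℕ, L = 2 * x + p + j → 1 ≤ L →
    ∑ w ∈ W L x p j, wt T c w =
      ∑ a ∈ Finset.HasAntidiagonal.antidiagonal x, T (c + a.1) * K T a.2 (p + a.1) j := by
  induction L with
  | zero => intro c x p j _ h; omega
  | succ L ih =>
    intro c x p j hL _
    rw [sum_W]
    have hK : (if 1 ≤ p then ∑ w ∈ W L x (p - 1) j, wt T 0 w +
        (if 1 ≤ j then ∑ w ∈ W L x p (j - 1), wt T 0 w else 0) else 0) = K T x p j := by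
      cases p with
      | zero => simp [K]
      | succ p =>
        simp only [show 1 ≤ p + 1 by omega, if_true, Nat.add_sub_cancel]
        by_cases hn : 1 ≤ x + p + j
        · rw [K_rec T x p j hn, ih 0 x p j (by omega) (by omega)]
          simp only [Nat.zero_add]
          congr 1
          split_ifs with hj
          · rw [ih 0 x (p + 1) (j - 1) (by omega) (by omega)]
            simp only [Nat.zero_add]
          · rfl
        · obtain ⟨rfl, rfl, rfl⟩ : x = 0 ∧ p = 0 ∧ j = 0 := by omega
          obtain rfl : L = 0 := by omega
          simp [W, wt, K, h0, cf_zero]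
    rw [hK]
    cases x with
    | zero => simp
    | succ x =>
      simp only [show 1 ≤ x + 1 by omega, if_true, Nat.add_sub_cancel]
      rw [ih (c + 1) x (p + 1) j (by omega) (by omega), Finset.Nat.sum_antidiagonal_succ, add_comm]
      congr 1
      refine Finset.sum_congr rfl fun a _ => ?_
      rw [show c + 1 + a.1 = c + (a.1 + 1) by ring, show p + 1 + a.1 = p + (a.1 + 1) by ring]

lemma good_iff (w : List Step) (p : ℕ) : good p w ↔
    (∀ i : ℕ, (w.take i).count Step.d ≤ p + (w.take i).count Step.u) ∧
    (∀ (i : ℕ) (hi : i < w.length), w[i]'hi = Step.h →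
      p + (w.take i).count Step.u ≠ (w.take i).count Step.d) := by
  induction w generalizing p with
  | nil => simp [good]
  | cons s w ih =>
    have e1 : (∀ i : ℕ, ((s :: w).take i).count Step.d ≤ p + ((s :: w).take i).count Step.u) ↔
        ∀ i : ℕ, (s :: w.take i).count Step.d ≤ p + (s :: w.take i).count Step.u := by
      constructor
      · intro h i; simpa using h (i + 1)
      · intro h i
        cases i with
        | zero => simp
        | succ i => simpa using h i
    have e2 : (∀ (i : ℕ) (hi : i < (s :: w).length), (s :: w)[i]'hi = Step.h →
      p + ((s :: w).take i).count Step.u ≠ ((s :: w).take i).count Step.d) ↔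
      (s = Step.h → p ≠ 0) ∧ (∀ (i : ℕ) (hi : i < w.length), w[i]'hi = Step.h →
      p + (s :: w.take i).count Step.u ≠ (s :: w.take i).count Step.d) := by
      constructor
      · intro h
        refine ⟨fun hs => by simpa using h 0 (by simp) (by simpa using hs), fun i hi hh => ?_⟩
        simpa using h (i + 1) (by simpa using hi) (by simpa using hh)
      · rintro ⟨h, h'⟩ i hi hh
        cases i with
        | zero => simpa using h (by simpa using hh)
        | succ i => simpa using h' i (by simpa using hi) (by simpa using hh)
    rw [e1, e2]
    cases s
    · rw [good, ih]
      simp [List.count_cons, add_assoc, add_comm 1, add_left_comm]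
    · rw [good, ih]
      simp only [List.count_cons]
      simp
      constructor
      · rintro ⟨hp, h1, h2⟩
        refine ⟨fun i => by have := h1 i; omega, fun i hi hh => by have := h2 i hi hh; omega⟩
      · rintro ⟨h1, h2⟩
        have := h1 0
        simp at this
        refine ⟨by omega, fun i => by have := h1 i; omega, fun i hi hh => by have := h2 i hi hh; omega⟩
    · rw [good, ih]
      simp [List.count_cons, Nat.one_le_iff_ne_zero]
      tauto

lemma qSet_eq (m j : ℕ) : qSet m j = ↑(W (2 * m + j) m 0 j) := by
  ext w
  rw [Finset.mem_coe, mem_W, good_iff]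
  simp only [qSet, pathSet, IsNonneg, NoLowH, Set.mem_ofPred_eq, Nat.zero_add, Nat.add_zero]
  have hl : w.length = w.count Step.u + w.count Step.d + w.count Step.h := by
    induction w with
    | nil => simp
    | cons s w ih => cases s <;> simp [List.count_cons, ih] <;> omega
  constructor
  · rintro ⟨⟨h1, h2, h3, h4⟩, h5⟩
    exact ⟨by omega, h1, h2, h3, h4, h5⟩
  · rintro ⟨_, h1, h2, h3, h4, h5⟩
    exact ⟨⟨h1, h2, h3, h4⟩, h5⟩

lemma uRuns_d (l : List Step) : uRuns (Step.d :: l) = uRuns l := by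
  simp [uRuns, runs]

lemma uRuns_h (l : List Step) : uRuns (Step.h :: l) = uRuns l := by
  simp [uRuns, runs]

lemma uRuns_rep (c : ℕ) (w : List Step) (hw : ∀ v, w ≠ Step.u :: v) :
    uRuns (List.replicate (c + 1) Step.u ++ w) = (c + 1) :: uRuns w := by
  induction c with
  | zero =>
    cases w with
    | nil => simp [uRuns, runs]
    | cons s w => cases s <;> simp_all [uRuns, runs]
  | succ c ih =>
    rw [List.replicate_succ, List.cons_append]
    rw [List.replicate_succ, List.cons_append] at ih ⊢
    unfold uRuns at ih ⊢
    rw [runs]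
    rw [ih]
    simp
    omega

lemma uRuns_ind (P : List ℕ → ℕ → List Step → Prop)
    (h1 : P [] 0 []) (h2 : ∀ c, P [c + 1] (c + 1) [])
    (h3 : ∀ l c w, P l (c + 1) w → P l c (Step.u :: w))
    (h4 : ∀ l w, P l 0 w → P l 0 (Step.d :: w)) (h5 : ∀ l w, P l 0 w → P l 0 (Step.h :: w))
    (h6 : ∀ l c w, P l 0 w → P ((c + 1) :: l) (c + 1) (Step.d :: w))
    (h7 : ∀ l c w, P l 0 w → P ((c + 1) :: l) (c + 1) (Step.h :: w))
    (w : List Step) (c : ℕ) : P (uRuns (List.replicate c Step.u ++ w)) c w := by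
  induction w generalizing c with
  | nil =>
    cases c with
    | zero => simpa [uRuns, runs] using h1
    | succ c => rw [uRuns_rep _ _ (by simp)]; simpa [uRuns, runs] using h2 c
  | cons s w ih =>
    have i0 := ih 0
    simp at i0
    cases s
    · have := ih (c + 1)
      rw [List.replicate_succ', List.append_assoc] at this
      exact h3 _ _ _ (by simpa using this)
    · cases c with
      | zero => simpa [uRuns_d] using h4 _ _ i0
      | succ c => rw [uRuns_rep _ _ (by simp), uRuns_d]; exact h6 _ _ _ i0
    · cases c with
      | zero => simpa [uRuns_h] using h5 _ _ i0
      | succ c => rw [uRuns_rep _ _ (by simp), uRuns_h]; exact h7 _ _ _ i0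

lemma wt_eq (T : ℕ → ℚ) (h0 : T 0 = 1) (w : List Step) :
    ((uRuns w).map T).prod = wt T 0 w := by
  have := uRuns_ind (fun l c w => (l.map T).prod = wt T c w)
    (by simp [wt, h0]) (by simp [wt]) (by simp [wt]) (by simp [wt, h0]) (by simp [wt, h0])
    (by simp +contextual [wt]) (by simp +contextual [wt]) w 0
  simpa using this

lemma runs_bd (w : List Step) : ∀ i ∈ uRuns w, 1 ≤ i ∧ i ≤ w.count Step.u := by
  have := uRuns_ind (fun l c w => ∀ i ∈ l, 1 ≤ i ∧ i ≤ c + w.count Step.u)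
    (by simp) (by simp) (by intro l c w h i hi; have := h i hi; simp; omega)
    (by simp) (by simp)
    (by intro l c w h i hi; simp at hi ⊢; rcases hi with rfl | hi
        · omega
        · have := h i hi; omega)
    (by intro l c w h i hi; simp at hi ⊢; rcases hi with rfl | hi
        · omega
        · have := h i hi; omega) w 0
  simpa using this

/-- truncated weights -/
def Tt (m : ℕ) (t : ℕ → ℚ) (i : ℕ) : ℚ := if i = 0 then 1 else if i ≤ m then t i else 0

lemma prod_eq (m : ℕ) (t : ℕ → ℚ) (w : List Step) (hw : w.count Step.u = m) :
    ∏ i ∈ Finset.Icc 1 m, t i ^ alpha i w = wt (Tt m t) 0 w := by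
  rw [← wt_eq _ (by simp [Tt]), Finset.prod_list_map_count]
  have hb := runs_bd w
  rw [hw] at hb
  symm
  have hs : (uRuns w).toFinset ⊆ Finset.Icc 1 m := by
    intro i hi
    rw [List.mem_toFinset] at hi
    simpa using hb i hi
  rw [Finset.prod_subset hs]
  · refine Finset.prod_congr rfl fun i hi => ?_
    rw [Finset.mem_Icc] at hi
    rw [Tt, if_neg (by omega), if_pos hi.2, alpha]
  · intro i _ hi
    rw [List.mem_toFinset] at hi
    rw [List.count_eq_zero_of_not_mem hi, pow_zero]

lemma bell_zero (m r : ℕ) (t : ℕ → ℚ) (h : m < r) : bellNorm m r t = 0 := by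
  rw [bellNorm]
  refine Finset.sum_eq_zero fun f _ => ?_
  rw [if_neg]
  rintro ⟨h1, h2⟩
  have : ∑ i : Fin m, (f i : ℕ) ≤ ∑ i : Fin m, ((i : ℕ) + 1) * (f i : ℕ) :=
    Finset.sum_le_sum fun i _ => by nlinarith
  omega

lemma mk_Tt (m : ℕ) (t : ℕ → ℚ) : (PowerSeries.mk (Tt m t) : PowerSeries ℚ) =
    (∑ i : Fin m, PowerSeries.monomial ((i : ℕ) + 1) (t (i + 1))) + 1 := by
  ext k
  simp only [PowerSeries.coeff_mk, map_add, map_sum, PowerSeries.coeff_monomial,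
    PowerSeries.coeff_one, Tt]
  rw [Fin.sum_univ_eq_sum_range (fun i => if k = i + 1 then t (i + 1) else 0) m]
  cases k with
  | zero => simp
  | succ k => simp [Finset.sum_ite_eq, Nat.succ_le_iff]

lemma coeff_bell (m r : ℕ) (t : ℕ → ℚ) :
    PowerSeries.coeff m ((∑ i : Fin m, PowerSeries.monomial ((i : ℕ) + 1) (t (i + 1))) ^ r) =
      bellNorm m r t := by
  rw [Finset.sum_pow_eq_sum_piAntidiag, map_sum, bellNorm]
  have e : ∀ k ∈ Finset.piAntidiag (Finset.univ : Finset (Fin m)) r,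
      PowerSeries.coeff m ((Nat.multinomial Finset.univ k : PowerSeries ℚ) *
        ∏ i : Fin m, PowerSeries.monomial ((i : ℕ) + 1) (t (i + 1)) ^ k i) =
      if (∑ i : Fin m, k i) = r ∧ (∑ i : Fin m, ((i : ℕ) + 1) * k i) = m then
      (r.factorial : ℚ) / (∏ i : Fin m, ((k i).factorial : ℚ)) *
        ∏ i : Fin m, t ((i : ℕ) + 1) ^ k i else 0 := by
    intro k hk
    have hk' : ∑ i : Fin m, k i = r := by simpa using hk
    have hmul := Nat.multinomial_spec (Finset.univ : Finset (Fin m)) k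
    rw [hk'] at hmul
    have hmul' : (Nat.multinomial Finset.univ k : ℚ) =
        (r.factorial : ℚ) / (∏ i : Fin m, ((k i).factorial : ℚ)) := by
      rw [eq_div_iff (by positivity), ← hmul]
      push_cast
      ring
    rw [← map_natCast (PowerSeries.C (R := ℚ)), PowerSeries.coeff_C_mul, hmul']
    simp only [PowerSeries.monomial_pow, PowerSeries.prod_monomial, PowerSeries.coeff_monomial, hk',
      true_and]
    have : (∑ i : Fin m, k i * ((i : ℕ) + 1)) = ∑ i : Fin m, ((i : ℕ) + 1) * k i :=
      Finset.sum_congr rfl fun i _ => mul_comm _ _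
    rw [this, mul_ite, mul_zero]
    simp only [eq_comm]
  rw [Finset.sum_congr rfl e]
  symm
  rw [← Finset.sum_filter, ← Finset.sum_filter]
  refine Finset.sum_bij (fun f _ i => (f i : ℕ)) ?_ ?_ ?_ ?_
  · intro f hf
    simp only [Finset.mem_filter, Finset.mem_univ, true_and] at hf
    simp [hf]
  · intro f _ g _ h
    funext i
    exact Fin.ext (congrFun h i)
  · intro k hk
    simp only [Finset.mem_filter] at hk
    have hb : ∀ i : Fin m, k i < m + 1 := by
      intro i
      have h1 := Finset.single_le_sum (f := fun i : Fin m => ((i : ℕ) + 1) * k i)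
        (fun i _ => Nat.zero_le _) (Finset.mem_univ i)
      have h2 : ((i : ℕ) + 1) * k i ≤ m := h1.trans_eq hk.2.2
      nlinarith
    refine ⟨fun i => ⟨k i, hb i⟩, ?_, rfl⟩
    simp [hk.2.1, hk.2.2]
  · intro f _
    rfl

lemma coeff_all (m N : ℕ) (hN : m ≤ N) (t : ℕ → ℚ) : cf (Tt m t) N m =
    ∑ r ∈ Finset.range (m + 1), (Nat.choose N r : ℚ) * bellNorm m r t := by
  rw [cf, mk_Tt, add_pow, map_sum]
  symm
  rw [Finset.sum_subset (s₂ := Finset.range (N + 1))]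
  · refine Finset.sum_congr rfl fun r _ => ?_
    rw [← coeff_bell, one_pow, mul_one, mul_comm, ← map_natCast (PowerSeries.C (R := ℚ)),
      PowerSeries.coeff_mul_C]
  · intro i; simp; omega
  · intro r _ h
    rw [bell_zero _ _ _ (by simpa using h), mul_zero]

end QP

theorem stmt8 (k j m : ℕ) (hm : 1 ≤ m) (t : ℕ → ℚ) :
    (∑ᶠ w ∈ qSet m j, ∏ i ∈ Finset.Icc 1 m, t i ^ alpha i w) =
      (m : ℚ) / ((m + j + 1) * (m + j)) * Nat.choose (m + j) j *
        ∑ r ∈ Finset.range (m + 1), (Nat.choose (m + j + 1) r : ℚ) * bellNorm m r t := by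
  rw [QP.qSet_eq, finsum_mem_coe_finset]
  have h : ∀ w ∈ QP.W (2 * m + j) m 0 j,
      ∏ i ∈ Finset.Icc 1 m, t i ^ alpha i w = QP.wt (QP.Tt m t) 0 w := by
    intro w hw
    rw [QP.mem_W] at hw
    exact QP.prod_eq m t w hw.2.1
  rw [Finset.sum_congr rfl h, QP.sum_main (QP.Tt m t) (by simp [QP.Tt]) _ 0 m 0 j (by ring) (by omega)]
  have h2 := QP.sum_K (QP.Tt m t) m 0 j
  simp only [Nat.zero_add] at h2 ⊢
  rw [h2, ← QP.coeff_all m (m + j + 1) (by omega) t]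
  simp only [Nat.add_zero]
  push_cast
  have : (m : ℚ) + j ≠ 0 := by
    have : m + j ≠ 0 := by omega
    exact_mod_cast this
  have : (m : ℚ) + j + 1 ≠ 0 := by positivity
  field_simp
  ring
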